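/- Exact expectation of the spectral covariance entries (exact form of the expectation part of Lemma 2). Let K ≥ 1 be an integer and N_w, N_s, δ_p, α_w, α_p, α_s real numbers. On a probability space let m_τ(k), m_u(k) for k ∈ {-K, …, K} be integrable real random variables with integrable products, and set μ_τ = (1/(2K+1)) Σ_k m_τ(k), μ_u = (1/(2K+1)) Σ_k m_u(k), and c_{τu} = (1/(2K)) Σ_k (m_τ(k) − μ_τ)(m_u(k) − μ_u). Assume: E[m_τ(k) m_u(k)] = N_w²(1+α_w) for each k < 0; E[m_τ(0) m_u(0)] = N_w²(1+α_w) + 2 N_w δ_p + α_p δ_p²; E[m_τ(k) m_u(k)] = N_w²(1+α_w) + 2 N_w N_s + 2 N_s (N_s + N_w) α_s for each k > 0; and E[μ_τ μ_u] = N_w² + N_w δ_p / K + α_p δ_p² / (4K²). Then E[c_{τu}] = ((2K+1)/(2K)) α_w N_w² + α_p δ_p² / (2K) − (2K+1) α_p δ_p² / (8K³) + N_s (N_w + (N_s + N_w) α_s) − N_w δ_p / (2K²). -/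

import Mathlib

open MeasureTheory ProbabilityTheory

/-- Exact expectation of the spectral covariance entries (exact form of the
expectation part of Lemma 2). -/
theorem expectation_spectral_covariance_entry {Ω : Type*} [MeasureSpace Ω]
    [IsProbabilityMeasure (ℙ : Measure Ω)]
    (K : ℤ) (hK : 1 ≤ K) (Nw Ns δp αw αp αs : ℝ)
    (mτ mu : ℤ → Ω → ℝ)
    (hintτ : ∀ k ∈ Finset.Icc (-K) K, Integrable (mτ k))
    (hintu : ∀ k ∈ Finset.Icc (-K) K, Integrable (mu k))
    (hintp : ∀ k ∈ Finset.Icc (-K) K, ∀ j ∈ Finset.Icc (-K) K,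
      Integrable (fun ω => mτ k ω * mu j ω))
    (hneg : ∀ k ∈ Finset.Icc (-K) K, k < 0 →
      ∫ ω, mτ k ω * mu k ω = Nw ^ 2 * (1 + αw))
    (hzero : ∫ ω, mτ 0 ω * mu 0 ω
      = Nw ^ 2 * (1 + αw) + 2 * Nw * δp + αp * δp ^ 2)
    (hpos : ∀ k ∈ Finset.Icc (-K) K, 0 < k →
      ∫ ω, mτ k ω * mu k ω
        = Nw ^ 2 * (1 + αw) + 2 * Nw * Ns + 2 * Ns * (Ns + Nw) * αs)
    (hμμ : ∫ ω, ((1 / (2 * (K : ℝ) + 1)) * ∑ k ∈ Finset.Icc (-K) K, mτ k ω)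
              * ((1 / (2 * (K : ℝ) + 1)) * ∑ k ∈ Finset.Icc (-K) K, mu k ω)
        = Nw ^ 2 + Nw * δp / (K : ℝ) + αp * δp ^ 2 / (4 * (K : ℝ) ^ 2)) :
    ∫ ω, (1 / (2 * (K : ℝ))) *
        ∑ k ∈ Finset.Icc (-K) K,
          (mτ k ω - (1 / (2 * (K : ℝ) + 1)) * ∑ j ∈ Finset.Icc (-K) K, mτ j ω) *
            (mu k ω - (1 / (2 * (K : ℝ) + 1)) * ∑ j ∈ Finset.Icc (-K) K, mu j ω)
      = ((2 * (K : ℝ) + 1) / (2 * (K : ℝ))) * αw * Nw ^ 2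
        + αp * δp ^ 2 / (2 * (K : ℝ))
        - (2 * (K : ℝ) + 1) * αp * δp ^ 2 / (8 * (K : ℝ) ^ 3)
        + Ns * (Nw + (Ns + Nw) * αs)
        - Nw * δp / (2 * (K : ℝ) ^ 2) := by
  have hKpos : (0 : ℝ) < K := by exact_mod_cast (by omega : (0 : ℤ) < K)
  have hcard : ((Finset.Icc (-K) K).card : ℝ) = 2 * (K : ℝ) + 1 := by
    have h : ((Finset.Icc (-K) K).card : ℤ) = 2 * K + 1 := by
      rw [Int.card_Icc]; omega
    exact_mod_cast h
  have hcard1 : ((Finset.Icc 1 K).card : ℝ) = (K : ℝ) := by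
    have h : ((Finset.Icc 1 K).card : ℤ) = K := by
      rw [Int.card_Icc]; omega
    exact_mod_cast h
  have hfilter : (Finset.Icc (-K) K).filter (fun k => 0 < k) = Finset.Icc 1 K := by
    ext k
    simp only [Finset.mem_filter, Finset.mem_Icc]
    omega
  have hmem0 : (0 : ℤ) ∈ Finset.Icc (-K) K := by
    simp only [Finset.mem_Icc]; omega
  have hsum : ∑ k ∈ Finset.Icc (-K) K, ∫ ω, mτ k ω * mu k ω
      = (2 * (K : ℝ) + 1) * (Nw ^ 2 * (1 + αw)) + (2 * Nw * δp + αp * δp ^ 2)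
        + K * (2 * Nw * Ns + 2 * Ns * (Ns + Nw) * αs) := by
    have h1 : ∀ k ∈ Finset.Icc (-K) K, ∫ ω, mτ k ω * mu k ω
        = Nw ^ 2 * (1 + αw) + (if k = 0 then 2 * Nw * δp + αp * δp ^ 2 else 0)
          + (if 0 < k then 2 * Nw * Ns + 2 * Ns * (Ns + Nw) * αs else 0) := by
      intro k hk
      rcases lt_trichotomy k 0 with h | h | h
      · rw [hneg k hk h, if_neg h.ne, if_neg h.not_gt]; ring
      · subst h
        rw [hzero, if_pos rfl, if_neg (lt_irrefl _)]; ring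
      · rw [hpos k hk h, if_neg h.ne', if_pos h]; ring
    rw [Finset.sum_congr rfl h1, Finset.sum_add_distrib, Finset.sum_add_distrib,
      Finset.sum_const, Finset.sum_ite_eq', if_pos hmem0, ← Finset.sum_filter, hfilter,
      Finset.sum_const, nsmul_eq_mul, nsmul_eq_mul, hcard, hcard1]
  have hpt : ∀ ω, (1 / (2 * (K : ℝ))) *
        ∑ k ∈ Finset.Icc (-K) K,
          (mτ k ω - (1 / (2 * (K : ℝ) + 1)) * ∑ j ∈ Finset.Icc (-K) K, mτ j ω) *
            (mu k ω - (1 / (2 * (K : ℝ) + 1)) * ∑ j ∈ Finset.Icc (-K) K, mu j ω)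
      = (1 / (2 * (K : ℝ))) * (∑ k ∈ Finset.Icc (-K) K, mτ k ω * mu k ω
        - (2 * (K : ℝ) + 1) * (((1 / (2 * (K : ℝ) + 1)) * ∑ k ∈ Finset.Icc (-K) K, mτ k ω)
              * ((1 / (2 * (K : ℝ) + 1)) * ∑ k ∈ Finset.Icc (-K) K, mu k ω))) := by
    intro ω
    congr 1
    simp only [sub_mul, mul_sub, Finset.sum_sub_distrib, ← Finset.sum_mul, ← Finset.mul_sum,
      Finset.sum_const, nsmul_eq_mul, hcard]
    field_simp
    ring
  have hI1 : Integrable (fun ω => ∑ k ∈ Finset.Icc (-K) K, mτ k ω * mu k ω) :=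
    integrable_finsetSum _ fun k hk => hintp k hk k hk
  have hI2 : Integrable (fun ω => ((1 / (2 * (K : ℝ) + 1)) * ∑ k ∈ Finset.Icc (-K) K, mτ k ω)
              * ((1 / (2 * (K : ℝ) + 1)) * ∑ k ∈ Finset.Icc (-K) K, mu k ω)) := by
    have h : Integrable (fun ω => ((1 / (2 * (K : ℝ) + 1)) * (1 / (2 * (K : ℝ) + 1))) *
        ∑ k ∈ Finset.Icc (-K) K, ∑ j ∈ Finset.Icc (-K) K, mτ k ω * mu j ω) :=
      (integrable_finsetSum _ fun k hk =>
        integrable_finsetSum _ fun j hj => hintp k hk j hj).const_mul _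
    refine h.congr (Filter.Eventually.of_forall fun ω => ?_)
    simp only [← Finset.sum_mul_sum]
    ring
  simp_rw [hpt]
  rw [integral_const_mul, integral_sub hI1 (hI2.const_mul _), integral_const_mul, hμμ,
    integral_finsetSum _ (fun k hk => hintp k hk k hk), hsum]
  field_simp
  ring
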